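/- Let A generate an α-times resolvent family {S_α(t)}_{t≥0} on X, where 1 < α < 2, let r > 0, let f : [0,r] → X be continuous and x, y ∈ X. If u ∈ C([0,r];X) is a mild solution of D_t^α u = Au + f, u(0) = x, u'(0) = y (i.e. (g_α*u)(t) ∈ D(A) and u(t) − x − ty = A((g_α*u)(t)) + (g_α*f)(t) for all t ∈ [0,r]), then u(t) = S_α(t)x + ∫_0^t S_α(s)y ds + (P_α*f)(t) for all t ∈ [0,r]. -/

import Mathlib

open MeasureTheory Set

/-- `g β t = t^(β-1)/Γ(β)`. -/
noncomputable def g (β t : ℝ) : ℝ := t ^ (β - 1) / Real.Gamma β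

/-- `Pa α S t x = (g_{α-1} * S)(t) x = ∫_0^t g_{α-1}(t-s) S(s) x ds`. -/
noncomputable def Pa {X : Type*} [NormedAddCommGroup X] [NormedSpace ℂ X]
    (α : ℝ) (S : ℝ → X →L[ℂ] X) (t : ℝ) (x : X) : X :=
  ∫ s in (0:ℝ)..t, g (α - 1) (t - s) • S s x

/-!
Let `*` be convolution on the half-line and `w(t) = x + t y + (g_α * f)(t)`, so that the mild
solution satisfies `u - w = A (g_α * u)`. Applying `S(t - s)` to `(g_α * u)(s)`, using the
resolvent equation and integrating in `s` gives
  `S * (g_α * u) = 1 * (g_α * u) + g_α * (S * (u - w))`.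
As scalar kernels commute with `S * ·`, this is `g_α * (1 * u) = g_α * (S * w)`. Convolution with
`g_α` is injective on continuous functions: convolve further to reach an integer order, then
differentiate. Hence `1 * u = S * w = 1 * (S x + 1 * S y + g_{α-1} * (S * f))`, and differentiating
once more gives the formula for `u`.
-/

open Filter Function Topology

section Fubini

variable {E : Type*} [NormedAddCommGroup E] [NormedSpace ℝ E]

theorem integral_triangle_swap {F : ℝ → ℝ → E} {a b : ℝ} (hab : a ≤ b)
    (hF : IntegrableOn (uncurry F) (Ioc a b ×ˢ Ioc a b)) :
    ∫ s in a..b, ∫ ρ in a..s, F s ρ = ∫ ρ in a..b, ∫ s in ρ..b, F s ρ := by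
  let T : Set (ℝ × ℝ) := {p | p.2 ≤ p.1}
  have inner_left : ∀ s ∈ Ioc a b,
      ∫ ρ in a..s, F s ρ = ∫ ρ in Ioc a b, T.indicator (uncurry F) (s, ρ) := fun s hs ↦ by
    have : (fun ρ ↦ T.indicator (uncurry F) (s, ρ)) = (Iic s).indicator (F s) := rfl
    rw [this, setIntegral_indicator measurableSet_Iic, Ioc_inter_Iic, min_eq_right hs.2,
      intervalIntegral.integral_of_le hs.1.le]
  have inner_right : ∀ ρ ∈ Ioc a b,
      ∫ s in ρ..b, F s ρ = ∫ s in Ioc a b, T.indicator (uncurry F) (s, ρ) := fun ρ hρ ↦ by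
    have : (fun s ↦ T.indicator (uncurry F) (s, ρ)) = (Ici ρ).indicator (fun s ↦ F s ρ) := rfl
    have hIcc : Ioc a b ∩ Ici ρ = Icc ρ b := by
      ext s
      exact ⟨fun h ↦ ⟨h.2, h.1.2⟩, fun h ↦ ⟨⟨hρ.1.trans_le h.1, h.2⟩, h.1⟩⟩
    rw [this, setIntegral_indicator measurableSet_Ici, hIcc, integral_Icc_eq_integral_Ioc,
      intervalIntegral.integral_of_le hρ.2]
  rw [intervalIntegral.integral_of_le hab, intervalIntegral.integral_of_le hab,
    setIntegral_congr_fun measurableSet_Ioc inner_left,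
    setIntegral_congr_fun measurableSet_Ioc inner_right]
  refine integral_integral_swap (Integrable.indicator ?_
    (measurableSet_le measurable_snd measurable_fst))
  rwa [Measure.prod_restrict]

theorem integrableOn_smul_snd_of_continuous {k : ℝ → ℝ} {Ψ : ℝ → ℝ → E} {a b : ℝ}
    (hk : IntervalIntegrable k volume a b) (hΨ : Continuous (uncurry Ψ)) :
    IntegrableOn (uncurry fun s ρ ↦ k ρ • Ψ s ρ) (Ioc a b ×ˢ Ioc a b) := by
  have hk_snd : IntegrableOn (fun p : ℝ × ℝ ↦ k p.2) (Ioc a b ×ˢ Ioc a b) := by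
    rw [IntegrableOn, Measure.volume_eq_prod, ← Measure.prod_restrict]
    exact hk.1.comp_snd _
  obtain ⟨C, hC⟩ := (isCompact_Icc.prod isCompact_Icc).exists_bound_of_continuousOn
    (hΨ.continuousOn (s := Icc a b ×ˢ Icc a b))
  refine hk_snd.smul_bdd C hΨ.aestronglyMeasurable ?_
  filter_upwards [ae_restrict_mem (measurableSet_Ioc.prod measurableSet_Ioc)] with p hp
  exact hC p (prod_mono Ioc_subset_Icc_self Ioc_subset_Icc_self hp)

end Fubini

section CausalConvolution

theorem continuous_antidiagonal {E : Type*} [TopologicalSpace E] {Φ : ℝ → ℝ → E}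
    (hΦ : Continuous (uncurry Φ)) (t : ℝ) : Continuous fun s ↦ Φ (t - s) s :=
  hΦ.comp (by fun_prop : Continuous fun s : ℝ ↦ (t - s, s))

variable {E : Type*} [NormedAddCommGroup E] [NormedSpace ℝ E]

/-- Convolution on the half-line, `∫₀ᵗ Φ (t - s) s ds`. The kernel is a function of two variables so
that it also covers `(S * h)(t) = ∫₀ᵗ S (t - s) (h s) ds` for an operator family `S` that is only
strongly continuous. -/
noncomputable def causalConv (Φ : ℝ → ℝ → E) (t : ℝ) : E := ∫ s in (0 : ℝ)..t, Φ (t - s) s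

/-- The convolution `k * h` of a scalar kernel with a vector-valued function. Fractional integration
of order `β` is `smulConv (g β)`. -/
noncomputable def smulConv (k : ℝ → ℝ) (h : ℝ → E) : ℝ → E := causalConv fun a b ↦ k a • h b

theorem causalConv_swap (Φ : ℝ → ℝ → E) : causalConv (fun a b ↦ Φ b a) = causalConv Φ := by
  ext t
  simpa [causalConv] using
    intervalIntegral.integral_comp_sub_left (a := 0) (b := t) (fun s ↦ Φ (t - s) s) t

theorem causalConv_congr {Φ Ψ : ℝ → ℝ → E} {t : ℝ} (ht : 0 ≤ t)
    (h : ∀ s ∈ Icc 0 t, Φ (t - s) s = Ψ (t - s) s) : causalConv Φ t = causalConv Ψ t :=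
  intervalIntegral.integral_congr fun s hs ↦ h s (uIcc_of_le ht ▸ hs)

theorem smulConv_congr {h h' : ℝ → E} {t : ℝ} (k : ℝ → ℝ) (ht : 0 ≤ t)
    (heq : EqOn h h' (Icc 0 t)) : smulConv k h t = smulConv k h' t :=
  causalConv_congr ht fun s hs ↦ by rw [heq hs]

theorem smulConv_eq_integral_smul_sub (k : ℝ → ℝ) (h : ℝ → E) (t : ℝ) :
    smulConv k h t = ∫ ρ in (0 : ℝ)..t, k ρ • h (t - ρ) := by
  rw [smulConv, ← causalConv_swap, causalConv]

theorem causalConv_smulConv_right {k : ℝ → ℝ} (hk : ∀ a b, IntervalIntegrable k volume a b)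
    {Φ : ℝ → ℝ → E} (hΦ : Continuous (uncurry Φ)) {t : ℝ} (ht : 0 ≤ t) :
    causalConv (fun a ↦ smulConv k (Φ a)) t = smulConv k (causalConv Φ) t := by
  have hΨ : Continuous (uncurry fun s ρ ↦ Φ (t - s) (s - ρ)) :=
    hΦ.comp (by fun_prop : Continuous fun p : ℝ × ℝ ↦ (t - p.1, p.1 - p.2))
  calc causalConv (fun a ↦ smulConv k (Φ a)) t
      = ∫ s in (0 : ℝ)..t, ∫ ρ in (0 : ℝ)..s, k ρ • Φ (t - s) (s - ρ) := by
        simp_rw [causalConv, smulConv_eq_integral_smul_sub]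
    _ = ∫ ρ in (0 : ℝ)..t, ∫ s in ρ..t, k ρ • Φ (t - s) (s - ρ) :=
        integral_triangle_swap ht (integrableOn_smul_snd_of_continuous (hk 0 t) hΨ)
    _ = ∫ ρ in (0 : ℝ)..t, k ρ • causalConv Φ (t - ρ) := by
        congr! 2 with ρ
        simpa [causalConv] using intervalIntegral.integral_comp_sub_right (a := ρ) (b := t)
          (fun τ ↦ k ρ • Φ (t - ρ - τ) τ) ρ
    _ = smulConv k (causalConv Φ) t := (smulConv_eq_integral_smul_sub k _ t).symm

theorem causalConv_smulConv_left {k : ℝ → ℝ} (hk : ∀ a b, IntervalIntegrable k volume a b)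
    {Φ : ℝ → ℝ → E} (hΦ : Continuous (uncurry Φ)) {t : ℝ} (ht : 0 ≤ t) :
    causalConv (fun a b ↦ smulConv k (fun a' ↦ Φ a' b) a) t = smulConv k (causalConv Φ) t := by
  have hΦ_swap : Continuous (uncurry fun a b ↦ Φ b a) := hΦ.comp continuous_swap
  rw [← causalConv_swap Φ, ← causalConv_smulConv_right hk hΦ_swap ht, ← causalConv_swap]

theorem integral_smulConv {k : ℝ → ℝ} (hk : ∀ a b, IntervalIntegrable k volume a b)
    {h : ℝ → E} (hh : Continuous h) {t : ℝ} (ht : 0 ≤ t) :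
    ∫ s in (0 : ℝ)..t, smulConv k h s = smulConv k (fun s ↦ ∫ τ in (0 : ℝ)..s, h τ) t :=
  causalConv_smulConv_right hk (Φ := fun _ ↦ h) (hh.comp continuous_snd) ht

theorem smulConv_smulConv [CompleteSpace E] {k l : ℝ → ℝ}
    (hk : ∀ a b, IntervalIntegrable k volume a b) (hl : Continuous l) {h : ℝ → E}
    (hh : Continuous h) {t : ℝ} (ht : 0 ≤ t) :
    smulConv k (smulConv l h) t = smulConv (smulConv k l) h t := by
  have hlh : Continuous (uncurry fun a b ↦ l a • h b) := by
    simp only [uncurry_def]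
    fun_prop
  calc smulConv k (smulConv l h) t
      = causalConv (fun a b ↦ smulConv k (fun a' ↦ l a' • h b) a) t :=
        (causalConv_smulConv_left hk hlh ht).symm
    _ = smulConv (smulConv k l) h t := by
        simp_rw [smulConv, causalConv, ← intervalIntegral.integral_smul_const, smul_smul,
          smul_eq_mul]

theorem intervalIntegrable_smul_comp_sub {k : ℝ → ℝ}
    (hk : ∀ a b, IntervalIntegrable k volume a b) {h : ℝ → E} (hh : Continuous h) (t a b : ℝ) :
    IntervalIntegrable (fun s ↦ k (t - s) • h s) volume a b := by
  have hk_sub : IntervalIntegrable (fun s ↦ k (t - s)) volume a b := by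
    simpa using (hk (t - a) (t - b)).comp_sub_left t
  exact hk_sub.smul_continuousOn hh.continuousOn

theorem smulConv_add {k : ℝ → ℝ} (hk : ∀ a b, IntervalIntegrable k volume a b)
    {h h' : ℝ → E} (hh : Continuous h) (hh' : Continuous h') :
    smulConv k (h + h') = smulConv k h + smulConv k h' := by
  ext t
  simp only [smulConv, causalConv, Pi.add_apply, smul_add]
  exact intervalIntegral.integral_add (intervalIntegrable_smul_comp_sub hk hh t 0 t)
    (intervalIntegrable_smul_comp_sub hk hh' t 0 t)

theorem continuous_causalConv {Φ : ℝ → ℝ → E} (hΦ : Continuous (uncurry Φ)) :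
    Continuous (causalConv Φ) :=
  intervalIntegral.continuous_parametric_intervalIntegral_of_continuous
    (f := fun t s ↦ Φ (t - s) s)
    (hΦ.comp (by fun_prop : Continuous fun p : ℝ × ℝ ↦ (p.1 - p.2, p.2))) continuous_id

theorem causalConv_add {Φ Ψ : ℝ → ℝ → E} (hΦ : Continuous (uncurry Φ))
    (hΨ : Continuous (uncurry Ψ)) : causalConv (Φ + Ψ) = causalConv Φ + causalConv Ψ := by
  ext t
  exact intervalIntegral.integral_add ((continuous_antidiagonal hΦ t).intervalIntegrable 0 t)
    ((continuous_antidiagonal hΨ t).intervalIntegrable 0 t)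

theorem causalConv_sub {Φ Ψ : ℝ → ℝ → E} (hΦ : Continuous (uncurry Φ))
    (hΨ : Continuous (uncurry Ψ)) : causalConv (Φ - Ψ) = causalConv Φ - causalConv Ψ := by
  ext t
  exact intervalIntegral.integral_sub ((continuous_antidiagonal hΦ t).intervalIntegrable 0 t)
    ((continuous_antidiagonal hΨ t).intervalIntegrable 0 t)

theorem continuous_smulConv {k : ℝ → ℝ} (hk : ∀ a b, IntervalIntegrable k volume a b)
    {h : ℝ → E} (hh : Continuous h) : Continuous (smulConv k h) := by
  rw [funext (smulConv_eq_integral_smul_sub k h), continuous_iff_continuousAt]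
  intro t
  let R := |t| + 1
  have hR : 0 < R := by positivity
  have ht : t ∈ Ioo (-R) R := abs_lt.1 (lt_add_one |t|)
  obtain ⟨C, hC⟩ := (isCompact_Icc (a := -(2 * R)) (b := 2 * R)).exists_bound_of_continuousOn
    hh.continuousOn
  have meas : ∀ s, AEStronglyMeasurable (fun ρ ↦ k ρ • h (s - ρ)) (volume.restrict (uIoc (-R) R)) :=
    fun s ↦ (intervalIntegrable_iff.1 (hk _ _)).aestronglyMeasurable.smul
      (by fun_prop : Continuous fun ρ ↦ h (s - ρ)).aestronglyMeasurable
  have bound : ∀ᶠ s in 𝓝 t, ∀ᵐ ρ ∂volume.restrict (uIoc (-R) R),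
      ‖k ρ • h (s - ρ)‖ ≤ ‖k ρ‖ * C := by
    filter_upwards [Ioo_mem_nhds ht.1 ht.2] with s hs
    filter_upwards [ae_restrict_mem measurableSet_uIoc] with ρ hρ
    rw [uIoc_of_le (by linarith)] at hρ
    rw [norm_smul]
    gcongr
    exact hC _ ⟨by linarith [hs.1, hρ.2], by linarith [hs.2, hρ.1]⟩
  have joint : ContinuousAt (fun p : ℝ × ℝ ↦ ∫ ρ in (0 : ℝ)..p.2, k ρ • h (p.1 - ρ)) (t, t) :=
    intervalIntegral.continuousAt_parametric_primitive_of_dominated _ (-R) R meas bound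
      ((hk _ _).norm.mul_const C) (ae_of_all _ fun ρ ↦ by fun_prop)
      ⟨neg_neg_of_pos hR, hR⟩ ht (measure_singleton t)
  exact joint.comp (f := fun s : ℝ ↦ (s, s)) (by fun_prop)

end CausalConvolution

section FractionalKernel

theorem intervalIntegrable_g {β : ℝ} (hβ : 0 < β) (a b : ℝ) :
    IntervalIntegrable (g β) volume a b :=
  (intervalIntegral.intervalIntegrable_rpow' (by linarith)).div_const _

theorem continuous_g {β : ℝ} (hβ : 1 ≤ β) : Continuous (g β) :=
  (Real.continuous_rpow_const (by linarith)).div_const _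

theorem g_one (t : ℝ) : g 1 t = 1 := by simp [g]

theorem integral_rpow_mul_sub_rpow {β γ : ℝ} (hβ : 0 < β) (hγ : 0 < γ) {t : ℝ} (ht : 0 < t) :
    ∫ s in (0 : ℝ)..t, s ^ (β - 1) * (t - s) ^ (γ - 1)
      = t ^ (β + γ - 1) * (Real.Gamma β * Real.Gamma γ / Real.Gamma (β + γ)) := by
  have beta := Complex.betaIntegral_scaled β γ ht
  rw [Complex.betaIntegral_eq_Gamma_mul_div _ _ (by simpa) (by simpa)] at beta
  have integrand_ofReal : ∀ s ∈ uIcc 0 t,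
      (s : ℂ) ^ ((β : ℂ) - 1) * ((t : ℂ) - s) ^ ((γ : ℂ) - 1)
        = ((s ^ (β - 1) * (t - s) ^ (γ - 1) : ℝ) : ℂ) := fun s hs ↦ by
    rw [uIcc_of_le ht.le] at hs
    push_cast [Complex.ofReal_cpow hs.1, Complex.ofReal_cpow (sub_nonneg.2 hs.2)]
    rfl
  rw [intervalIntegral.integral_congr integrand_ofReal, intervalIntegral.integral_ofReal,
    ← Complex.ofReal_add, Complex.Gamma_ofReal, Complex.Gamma_ofReal, Complex.Gamma_ofReal,
    ← Complex.ofReal_one, ← Complex.ofReal_sub, ← Complex.ofReal_cpow ht.le] at beta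
  exact_mod_cast beta

theorem smulConv_g_g {β γ : ℝ} (hβ : 0 < β) (hγ : 0 < γ) {t : ℝ} (ht : 0 < t) :
    smulConv (g β) (g γ) t = g (β + γ) t := by
  have hΓβ := (Real.Gamma_pos_of_pos hβ).ne'
  have hΓγ := (Real.Gamma_pos_of_pos hγ).ne'
  have factor : ∀ s, g β s • g γ (t - s)
      = (Real.Gamma β * Real.Gamma γ)⁻¹ * (s ^ (β - 1) * (t - s) ^ (γ - 1)) := fun s ↦ by
    simp only [g, smul_eq_mul]
    field_simp
  simp_rw [smulConv_eq_integral_smul_sub, factor]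
  rw [intervalIntegral.integral_const_mul, integral_rpow_mul_sub_rpow hβ hγ ht, g]
  field_simp

variable {E : Type*} [NormedAddCommGroup E] [NormedSpace ℝ E]

theorem smulConv_g_one (h : ℝ → E) :
    smulConv (g 1) h = fun t ↦ ∫ s in (0 : ℝ)..t, h s := by
  ext t
  simp_rw [smulConv, causalConv, g_one, one_smul]

variable [CompleteSpace E]

theorem smulConv_g_smulConv_g {β γ : ℝ} (hβ : 0 < β) (hγ : 1 ≤ γ) {h : ℝ → E}
    (hh : Continuous h) {t : ℝ} (ht : 0 ≤ t) :
    smulConv (g β) (smulConv (g γ) h) t = smulConv (g (β + γ)) h t := by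
  rw [smulConv_smulConv (intervalIntegrable_g hβ) (continuous_g hγ) hh ht]
  refine intervalIntegral.integral_congr_ae ?_
  filter_upwards [Measure.ae_ne volume t] with s hst hs
  rw [uIoc_of_le ht] at hs
  rw [smulConv_g_g hβ (by linarith) (sub_pos.2 (hs.2.lt_of_ne hst))]

theorem integral_smulConv_g {β : ℝ} (hβ : 0 < β) {h : ℝ → E} (hh : Continuous h)
    {t : ℝ} (ht : 0 ≤ t) :
    ∫ s in (0 : ℝ)..t, smulConv (g β) h s = smulConv (g (β + 1)) h t := by
  rw [integral_smulConv (intervalIntegrable_g hβ) hh ht, ← smulConv_g_smulConv_g hβ le_rfl hh ht,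
    smulConv_g_one]

theorem eqOn_of_integral_eq {h h' : ℝ → E} (hh : Continuous h) (hh' : Continuous h') {a b : ℝ}
    (hab : a < b) (hint : ∀ t ∈ Icc a b, ∫ s in a..t, h s = ∫ s in a..t, h' s) :
    EqOn h h' (Icc a b) := by
  have interior : EqOn h h' (Ioo a b) := fun t ht ↦ by
    have hint_near : (fun t ↦ ∫ s in a..t, h s) =ᶠ[𝓝 t] fun t ↦ ∫ s in a..t, h' s := by
      filter_upwards [Icc_mem_nhds ht.1 ht.2] using hint
    rw [← hh.deriv_integral h a t, hint_near.deriv_eq, hh'.deriv_integral]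
  rw [← closure_Ioo hab.ne]
  exact interior.closure hh hh'

theorem eqOn_of_smulConv_g_natCast_eqOn {r : ℝ} (hr : 0 < r) {h h' : ℝ → E} (hh : Continuous h)
    (hh' : Continuous h') (n : ℕ)
    (hconv : EqOn (smulConv (g (n + 1)) h) (smulConv (g (n + 1)) h') (Icc 0 r)) :
    EqOn h h' (Icc 0 r) := by
  induction n with
  | zero =>
    refine eqOn_of_integral_eq hh hh' hr fun t ht ↦ ?_
    simpa [smulConv_g_one] using hconv ht
  | succ n ih =>
    have hn : (0 : ℝ) < n + 1 := by positivity
    have hg := intervalIntegrable_g hn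
    refine ih (eqOn_of_integral_eq (continuous_smulConv hg hh) (continuous_smulConv hg hh') hr
      fun t ht ↦ ?_)
    simpa [integral_smulConv_g hn hh ht.1, integral_smulConv_g hn hh' ht.1] using hconv ht

theorem eqOn_of_smulConv_g_eqOn {β : ℝ} (hβ : 0 < β) {r : ℝ} (hr : 0 < r) {h h' : ℝ → E}
    (hh : Continuous h) (hh' : Continuous h')
    (hconv : EqOn (smulConv (g β) h) (smulConv (g β) h') (Icc 0 r)) : EqOn h h' (Icc 0 r) := by
  have raised : EqOn (smulConv (g (β + 1)) h) (smulConv (g (β + 1)) h') (Icc 0 r) := fun t ht ↦ by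
    rw [← integral_smulConv_g hβ hh ht.1, ← integral_smulConv_g hβ hh' ht.1]
    exact causalConv_congr (Φ := fun _ ↦ smulConv (g β) h) (Ψ := fun _ ↦ smulConv (g β) h') ht.1
      fun s hs ↦ hconv ⟨hs.1, hs.2.trans ht.2⟩
  obtain ⟨n, hn⟩ := exists_nat_gt β
  have split_order : (n + 1 : ℝ) = (n - β) + (β + 1) := by ring
  refine eqOn_of_smulConv_g_natCast_eqOn hr hh hh' n fun t ht ↦ ?_
  rw [split_order, ← smulConv_g_smulConv_g (sub_pos.2 hn) (by linarith) hh ht.1,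
    ← smulConv_g_smulConv_g (sub_pos.2 hn) (by linarith) hh' ht.1]
  exact smulConv_congr _ ht.1 (raised.mono (Icc_subset_Icc_right ht.2))

end FractionalKernel

theorem continuous_apply_of_strongly_continuous {𝕜 ι X Y : Type*} [NontriviallyNormedField 𝕜]
    [TopologicalSpace ι] [WeaklyLocallyCompactSpace ι]
    [NormedAddCommGroup X] [NormedSpace 𝕜 X] [CompleteSpace X]
    [NormedAddCommGroup Y] [NormedSpace 𝕜 Y]
    {S : ι → X →L[𝕜] Y} (hS : ∀ x, Continuous fun t ↦ S t x) :
    Continuous fun p : ι × X ↦ S p.1 p.2 := by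
  refine continuous_iff_continuousAt.2 fun p ↦ ?_
  obtain ⟨K, hK, hpK⟩ := exists_compact_mem_nhds p.1
  obtain ⟨C, hC⟩ : ∃ C, ∀ t : K, ‖S t‖ ≤ C := banach_steinhaus fun x ↦
    (hK.exists_bound_of_continuousOn (hS x).continuousOn).imp fun _ h t ↦ h t t.2
  have lipschitz : ∀ t ∈ K, LipschitzOnWith C.toNNReal (S t) univ := fun t ht ↦
    ((S t).lipschitz.weaken (NNReal.le_toNNReal_of_coe_le (hC ⟨t, ht⟩))).lipschitzOnWith
  exact (continuousOn_prod_of_continuousOn_lipschitzOnWith' _ _ lipschitz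
    fun x _ ↦ (hS x).continuousOn).continuousAt (prod_mem_nhds hpK univ_mem)

section ResolventFamily

variable {𝕜 X : Type*} [RCLike 𝕜] [NormedAddCommGroup X] [NormedSpace 𝕜 X]
  {S : ℝ → X →L[𝕜] X}

theorem continuous_uncurry_apply [CompleteSpace X] (hS : ∀ x, Continuous fun t ↦ S t x)
    {h : ℝ → X} (hh : Continuous h) : Continuous (uncurry fun a b ↦ S a (h b)) :=
  (continuous_apply_of_strongly_continuous hS).comp
    (by fun_prop : Continuous fun p : ℝ × ℝ ↦ (p.1, h p.2))

variable [NormedSpace ℝ X]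

/-- The convolution `S * h` of an operator family with a vector-valued function, evaluated pointwise
since `S` need not be measurable in operator norm. -/
noncomputable def opConv (S : ℝ → X →L[𝕜] X) (h : ℝ → X) : ℝ → X :=
  causalConv fun a b ↦ S a (h b)

theorem opConv_const (S : ℝ → X →L[𝕜] X) (x : X) :
    opConv S (fun _ ↦ x) = fun t ↦ ∫ s in (0 : ℝ)..t, S s x :=
  causalConv_swap fun _ b ↦ S b x

variable [CompleteSpace X]

theorem continuous_opConv (hS : ∀ x, Continuous fun t ↦ S t x) {h : ℝ → X} (hh : Continuous h) :
    Continuous (opConv S h) :=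
  continuous_causalConv (continuous_uncurry_apply hS hh)

theorem opConv_add (hS : ∀ x, Continuous fun t ↦ S t x) {h h' : ℝ → X} (hh : Continuous h)
    (hh' : Continuous h') : opConv S (h + h') = opConv S h + opConv S h' := by
  simp only [opConv, Pi.add_apply, map_add]
  exact causalConv_add (continuous_uncurry_apply hS hh) (continuous_uncurry_apply hS hh')

theorem smulConv_opConv (hS : ∀ x, Continuous fun t ↦ S t x) {k : ℝ → ℝ}
    (hk : ∀ a b, IntervalIntegrable k volume a b) {h : ℝ → X} (hh : Continuous h)
    {t : ℝ} (ht : 0 ≤ t) :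
    smulConv k (opConv S h) t = causalConv (fun a b ↦ smulConv k (fun s ↦ S s (h b)) a) t :=
  (causalConv_smulConv_left hk (continuous_uncurry_apply hS hh) ht).symm

theorem opConv_smulConv (hS : ∀ x, Continuous fun t ↦ S t x) {k : ℝ → ℝ}
    (hk : ∀ a b, IntervalIntegrable k volume a b) {h : ℝ → X} (hh : Continuous h)
    {t : ℝ} (ht : 0 ≤ t) : opConv S (smulConv k h) t = smulConv k (opConv S h) t := by
  have apply_smulConv : ∀ a b, S a (smulConv k h b) = smulConv k (fun s ↦ S a (h s)) b := by
    intro a b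
    simp_rw [smulConv, causalConv, ← map_real_smul (S a) (S a).continuous]
    exact ((S a).intervalIntegral_comp_comm (intervalIntegrable_smul_comp_sub hk hh b 0 b)).symm
  simp_rw [opConv, apply_smulConv]
  exact causalConv_smulConv_right hk (continuous_uncurry_apply hS hh) ht

theorem smulConv_integral_eq_smulConv_opConv {k : ℝ → ℝ}
    (hk : ∀ a b, IntervalIntegrable k volume a b) {A : Set (X × X)}
    (hS : ∀ x, Continuous fun t ↦ S t x) {r : ℝ}
    (hS_eq : ∀ t ∈ Icc 0 r, ∀ x y, (x, y) ∈ A → S t x = x + smulConv k (fun s ↦ S s y) t)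
    {v w : ℝ → X} (hv : Continuous v) (hw : Continuous w)
    (hvw : ∀ t ∈ Icc 0 r, (smulConv k (v + w) t, v t) ∈ A) :
    EqOn (smulConv k fun t ↦ ∫ s in (0 : ℝ)..t, (v + w) s) (smulConv k (opConv S w))
      (Icc 0 r) := by
  intro t ht
  set u := v + w
  have hu : Continuous u := hv.add hw
  have hku := continuous_smulConv hk hu
  have split : smulConv k (opConv S u) t
      = smulConv k (opConv S v) t + smulConv k (opConv S w) t := by
    rw [opConv_add hS hv hw,
      smulConv_add hk (continuous_opConv hS hv) (continuous_opConv hS hw), Pi.add_apply]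
  have resolvent : smulConv k (opConv S v) t
      = smulConv k (opConv S u) t - smulConv k (fun t ↦ ∫ s in (0 : ℝ)..t, u s) t := calc
    _ = causalConv (fun a b ↦ smulConv k (fun s ↦ S s (v b)) a) t := smulConv_opConv hS hk hv ht.1
    _ = causalConv ((fun a b ↦ S a (smulConv k u b)) - fun _ ↦ smulConv k u) t :=
      causalConv_congr ht.1 fun s hs ↦ eq_sub_of_add_eq' (hS_eq (t - s)
        ⟨sub_nonneg.2 hs.2, by linarith [hs.1, ht.2]⟩ _ _ (hvw s ⟨hs.1, hs.2.trans ht.2⟩)).symm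
    _ = opConv S (smulConv k u) t - ∫ s in (0 : ℝ)..t, smulConv k u s :=
      congrFun (causalConv_sub (Ψ := fun _ ↦ smulConv k u) (continuous_uncurry_apply hS hku)
        (hku.comp continuous_snd)) t
    _ = _ := by rw [opConv_smulConv hS hk hu ht.1, integral_smulConv hk hu ht.1]
  rw [split, add_sub_assoc, left_eq_add, sub_eq_zero] at resolvent
  exact resolvent.symm

theorem opConv_affine_add_smulConv_g {α : ℝ} (hα : 1 < α)
    (hS : ∀ x, Continuous fun t ↦ S t x) {f : ℝ → X} (hf : Continuous f) (x y : X)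
    {t : ℝ} (ht : 0 ≤ t) :
    opConv S (fun s ↦ x + s • y + smulConv (g α) f s) t
      = ∫ s in (0 : ℝ)..t,
          (S s x + (∫ τ in (0 : ℝ)..s, S τ y) + smulConv (g (α - 1)) (opConv S f) s) := by
  have hg := intervalIntegrable_g (zero_lt_one.trans hα)
  have hSf := continuous_opConv hS hf
  have hSf_conv := continuous_smulConv (intervalIntegrable_g (sub_pos.2 hα)) hSf
  have hSy : Continuous fun t ↦ ∫ s in (0 : ℝ)..t, S s y :=
    intervalIntegral.continuous_primitive (hS y).intervalIntegrable 0
  have linear_term : opConv S (fun s ↦ s • y) t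
      = ∫ s in (0 : ℝ)..t, ∫ τ in (0 : ℝ)..s, S τ y := by
    simpa [smulConv_g_one, opConv_const] using
      opConv_smulConv hS (intervalIntegrable_g one_pos) (continuous_const (y := y)) ht
  have forcing_term : opConv S (smulConv (g α) f) t
      = ∫ s in (0 : ℝ)..t, smulConv (g (α - 1)) (opConv S f) s := by
    rw [opConv_smulConv hS hg hf ht, integral_smulConv_g (sub_pos.2 hα) hSf ht, sub_add_cancel]
  calc opConv S (fun s ↦ x + s • y + smulConv (g α) f s) t
      = opConv S (fun _ ↦ x) t + opConv S (fun s ↦ s • y) t + opConv S (smulConv (g α) f) t := by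
        have hline : Continuous fun s : ℝ ↦ s • y := by fun_prop
        rw [← Pi.add_apply, ← opConv_add hS continuous_const hline, ← Pi.add_apply,
          ← opConv_add hS (continuous_const.add hline) (continuous_smulConv hg hf)]
        rfl
    _ = _ := by
        rw [opConv_const, linear_term, forcing_term,
          ← intervalIntegral.integral_add ((hS x).intervalIntegrable 0 t)
            (hSy.intervalIntegrable 0 t),
          ← intervalIntegral.integral_add (Continuous.intervalIntegrable (by fun_prop) 0 t)
            (hSf_conv.intervalIntegrable 0 t)]

theorem eqOn_variation_of_parameters {α : ℝ} (hα : 1 < α) {A : Set (X × X)}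
    (hS : ∀ x, Continuous fun t ↦ S t x) {r : ℝ} (hr : 0 < r)
    (hS_eq : ∀ t ∈ Icc 0 r, ∀ x y, (x, y) ∈ A → S t x = x + smulConv (g α) (fun s ↦ S s y) t)
    {f u : ℝ → X} (hf : Continuous f) (hu : Continuous u) {x y : X}
    (hmild : ∀ t ∈ Icc 0 r, (smulConv (g α) u t, u t - x - t • y - smulConv (g α) f t) ∈ A) :
    EqOn u (fun t ↦ S t x + (∫ s in (0 : ℝ)..t, S s y) + smulConv (g (α - 1)) (opConv S f) t)
      (Icc 0 r) := by
  have hα_pos : 0 < α := zero_lt_one.trans hα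
  have hg := intervalIntegrable_g hα_pos
  have hg' := intervalIntegrable_g (sub_pos.2 hα)
  have primitive_continuous : ∀ {h : ℝ → X}, Continuous h →
      Continuous fun t ↦ ∫ s in (0 : ℝ)..t, h s :=
    fun hh ↦ intervalIntegral.continuous_primitive hh.intervalIntegrable 0
  let w : ℝ → X := fun t ↦ x + t • y + smulConv (g α) f t
  have hw : Continuous w := by
    have := continuous_smulConv hg hf
    fun_prop
  have hvw : ∀ t ∈ Icc 0 r, (smulConv (g α) (u - w + w) t, (u - w) t) ∈ A := fun t ht ↦ by
    simpa only [sub_add_cancel, Pi.sub_apply, w, ← sub_sub] using hmild t ht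
  have integrated : EqOn (fun t ↦ ∫ s in (0 : ℝ)..t, u s) (opConv S w) (Icc 0 r) := by
    refine eqOn_of_smulConv_g_eqOn hα_pos hr (primitive_continuous hu) (continuous_opConv hS hw) ?_
    simpa only [sub_add_cancel] using
      smulConv_integral_eq_smulConv_opConv hg hS hS_eq (hu.sub hw) hw hvw
  refine eqOn_of_integral_eq hu (((hS x).add (primitive_continuous (hS y))).add
    (continuous_smulConv hg' (continuous_opConv hS hf))) hr fun t ht ↦ ?_
  exact (integrated ht).trans (opConv_affine_add_smulConv_g hα hS hf x y ht.1)

end ResolventFamily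

theorem stmt_8_general
    {X : Type*} [NormedAddCommGroup X] [NormedSpace ℂ X] [CompleteSpace X]
    {α : ℝ} (hα : 1 < α) {A : Set (X × X)} {S : ℝ → X →L[ℂ] X} {r : ℝ} (hr : 0 < r)
    (hS_cont : ∀ x, ContinuousOn (fun t ↦ S t x) (Icc 0 r))
    (hS_eq : ∀ t ∈ Icc 0 r, ∀ x y, (x, y) ∈ A →
      S t x = x + ∫ s in (0 : ℝ)..t, g α (t - s) • S s y)
    {f u : ℝ → X} (hf : ContinuousOn f (Icc 0 r)) (hu : ContinuousOn u (Icc 0 r)) {x y : X}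
    (hmild : ∀ t ∈ Icc 0 r,
      (∫ s in (0 : ℝ)..t, g α (t - s) • u s,
        u t - x - t • y - ∫ s in (0 : ℝ)..t, g α (t - s) • f s) ∈ A) :
    ∀ t ∈ Icc 0 r,
      u t = S t x + (∫ s in (0 : ℝ)..t, S s y) + ∫ s in (0 : ℝ)..t, Pa α S (t - s) (f s) := by
  -- All data are extended continuously to `ℝ` by clamping the time variable to `[0, r]`.
  let c : ℝ → ℝ := fun t ↦ projIcc 0 r hr.le t
  have hc : Continuous c := continuous_subtype_val.comp continuous_projIcc
  have hc_mem : ∀ t, c t ∈ Icc 0 r := fun t ↦ (projIcc 0 r hr.le t).2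
  have hc_eq : ∀ t ∈ Icc 0 r, c t = t := fun t ht ↦ by simp only [c, projIcc_of_mem hr.le ht]
  have smulConv_comp : ∀ (k : ℝ → ℝ) (h : ℝ → X), ∀ t ∈ Icc 0 r,
      smulConv k (h ∘ c) t = smulConv k h t := fun k h t ht ↦
    smulConv_congr k ht.1 fun s hs ↦ congrArg h (hc_eq s ⟨hs.1, hs.2.trans ht.2⟩)
  have hSc : ∀ x, Continuous fun t ↦ (S ∘ c) t x := fun x ↦ (hS_cont x).comp_continuous hc hc_mem
  have hfc : Continuous (f ∘ c) := hf.comp_continuous hc hc_mem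
  have hS_eq_c : ∀ t ∈ Icc 0 r, ∀ x y, (x, y) ∈ A →
      (S ∘ c) t x = x + smulConv (g α) (fun s ↦ (S ∘ c) s y) t := fun t ht x y hxy ↦ by
    rw [comp_apply, hc_eq t ht, hS_eq t ht x y hxy]
    exact congrArg (x + ·) (smulConv_comp (g α) (S · y) t ht).symm
  have hmild_c : ∀ t ∈ Icc 0 r,
      (smulConv (g α) (u ∘ c) t, (u ∘ c) t - x - t • y - smulConv (g α) (f ∘ c) t) ∈ A :=
    fun t ht ↦ by
      rw [smulConv_comp _ u t ht, smulConv_comp _ f t ht, comp_apply, hc_eq t ht]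
      exact hmild t ht
  intro t ht
  have solution := eqOn_variation_of_parameters hα hSc hr hS_eq_c hfc
    (hu.comp_continuous hc hc_mem) hmild_c ht
  have integral_y : ∫ s in (0 : ℝ)..t, S (c s) y = ∫ s in (0 : ℝ)..t, S s y := by
    simpa only [smulConv_g_one, comp_apply] using smulConv_comp (g 1) (S · y) t ht
  have integral_f : smulConv (g (α - 1)) (opConv (S ∘ c) (f ∘ c)) t
      = ∫ s in (0 : ℝ)..t, Pa α S (t - s) (f s) := by
    rw [smulConv_opConv hSc (intervalIntegrable_g (sub_pos.2 hα)) hfc ht.1]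
    refine causalConv_congr (Ψ := fun a b ↦ Pa α S a (f b)) ht.1 fun s hs ↦ ?_
    rw [comp_apply, hc_eq s ⟨hs.1, hs.2.trans ht.2⟩]
    exact smulConv_comp _ (S · (f s)) _ ⟨sub_nonneg.2 hs.2, by linarith [hs.1, ht.2]⟩
  simpa only [integral_y, integral_f, comp_apply, hc_eq t ht] using solution

theorem stmt_8
    {X : Type*} [NormedAddCommGroup X] [NormedSpace ℂ X] [CompleteSpace X]
    (α : ℝ) (hα1 : 1 < α) (hα2 : α < 2)
    (A : X →ₗ.[ℂ] X) (hA_closed : IsClosed (A.graph : Set (X × X)))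
    (hA_dense : Dense (A.domain : Set X))
    (S : ℝ → X →L[ℂ] X)
    (hS_cont : ∀ x : X, ContinuousOn (fun t => S t x) (Ici (0:ℝ)))
    (hS_zero : S 0 = 1)
    (hS_dom : ∀ t : ℝ, 0 ≤ t → ∀ x ∈ A.domain, S t x ∈ A.domain)
    (hS_comm : ∀ t : ℝ, 0 ≤ t → ∀ x y : X, (x, y) ∈ A.graph → (S t x, S t y) ∈ A.graph)
    (hS_eq : ∀ t : ℝ, 0 ≤ t → ∀ x y : X, (x, y) ∈ A.graph →
      S t x = x + ∫ s in (0:ℝ)..t, g α (t - s) • S s y)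
    (r : ℝ) (hr : 0 < r) (f : ℝ → X) (hf : ContinuousOn f (Icc 0 r))
    (x y : X) (u : ℝ → X) (hu : ContinuousOn u (Icc 0 r))
    (hmild : ∀ t ∈ Icc (0:ℝ) r,
      ((∫ s in (0:ℝ)..t, g α (t - s) • u s),
        u t - x - t • y - ∫ s in (0:ℝ)..t, g α (t - s) • f s) ∈ A.graph) :
    ∀ t ∈ Icc (0:ℝ) r,
      u t = S t x + (∫ s in (0:ℝ)..t, S s y) + ∫ s in (0:ℝ)..t, Pa α S (t - s) (f s) :=
  stmt_8_general hα1 (A := (A.graph : Set (X × X))) hr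
    (fun x ↦ (hS_cont x).mono Icc_subset_Ici_self) (fun t ht ↦ hS_eq t ht.1) hf hu hmild
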